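/- arXiv:1404.2289 — 2 statements merged into one kernel-verified Lean document; each statement's English description precedes it below -/
import Mathlib

section
/- (Claim 1 of the MCE NP-completeness reduction.) Let φ be a 3-CNF formula with n ≥ 1 variables and m ≥ 1 clauses, and consider its MCE gadget graph. If σ : {1,…,n} → Bool is a satisfying assignment of φ, then the selection R = ⋃_{i : σ(x_i) = true} P_i ∪ ⋃_{i : σ(x_i) = false} N_i is a union of classes, R connects the source u_1 to the sink b_m, and the total weight of R is exactly n (in particular at most n). -/
/-- A literal over variables `x_1, …, x_n` (indexed by `Fin n`): a variable
index together with a polarity (`true` for `x_i`, `false` for `¬x_i`). -/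
structure Lit (n : ℕ) where
  var : Fin n
  pos : Bool
  deriving DecidableEq

/-- A 3-CNF formula with `n` variables and `m` clauses: clause `j` has three
literals, indexed by `Fin 3`. -/
def CnfFormula (n m : ℕ) := Fin m → Fin 3 → Lit n

/-- The assignment `σ` satisfies the formula `φ`: every clause contains a
literal made true by `σ`. -/
def Satisfies {n m : ℕ} (φ : CnfFormula n m) (σ : Fin n → Bool) : Prop :=
  ∀ j : Fin m, ∃ k : Fin 3, σ (φ j k).var = (φ j k).pos

/-- The nodes of the MCE gadget graph: six nodes per variable gadget and
eight nodes per clause gadget. -/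
inductive MceNode (n m : ℕ) : Type
  | u  : Fin n → MceNode n m
  | ut : Fin n → MceNode n m
  | vt : Fin n → MceNode n m
  | uf : Fin n → MceNode n m
  | vf : Fin n → MceNode n m
  | v  : Fin n → MceNode n m
  | a  : Fin m → MceNode n m
  | ak : Fin m → Fin 3 → MceNode n m
  | bk : Fin m → Fin 3 → MceNode n m
  | b  : Fin m → MceNode n m
  deriving DecidableEq, Fintype

/-- The solid (always present) edges of the MCE gadget graph. -/
inductive SolidEdge (n m : ℕ) : MceNode n m → MceNode n m → Prop
  | u_ut (i : Fin n) : SolidEdge n m (.u i) (.ut i)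
  | u_uf (i : Fin n) : SolidEdge n m (.u i) (.uf i)
  | vt_v (i : Fin n) : SolidEdge n m (.vt i) (.v i)
  | vf_v (i : Fin n) : SolidEdge n m (.vf i) (.v i)
  | a_ak (j : Fin m) (k : Fin 3) : SolidEdge n m (.a j) (.ak j k)
  | bk_b (j : Fin m) (k : Fin 3) : SolidEdge n m (.bk j k) (.b j)
  | v_u (i i' : Fin n) (h : (i : ℕ) + 1 = (i' : ℕ)) : SolidEdge n m (.v i) (.u i')
  | v_a (i : Fin n) (j : Fin m) (hi : (i : ℕ) + 1 = n) (hj : (j : ℕ) = 0) :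
      SolidEdge n m (.v i) (.a j)
  | b_a (j j' : Fin m) (h : (j : ℕ) + 1 = (j' : ℕ)) : SolidEdge n m (.b j) (.a j')

/-- The class `P_i` of candidate edges: the variable edge `(u_i^t, v_i^t)`
together with every clause edge `(a_j^k, b_j^k)` whose literal is `x_i`. -/
def Pclass {n m : ℕ} (φ : CnfFormula n m) (i : Fin n) :
    Finset (MceNode n m × MceNode n m) :=
  {(MceNode.ut i, MceNode.vt i)} ∪
    ((Finset.univ : Finset (Fin m × Fin 3)).filter
        (fun jk => φ jk.1 jk.2 = ⟨i, true⟩)).image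
      (fun jk => (MceNode.ak jk.1 jk.2, MceNode.bk jk.1 jk.2))

/-- The class `N_i` of candidate edges: the variable edge `(u_i^f, v_i^f)`
together with every clause edge `(a_j^k, b_j^k)` whose literal is `¬x_i`. -/
def Nclass {n m : ℕ} (φ : CnfFormula n m) (i : Fin n) :
    Finset (MceNode n m × MceNode n m) :=
  {(MceNode.uf i, MceNode.vf i)} ∪
    ((Finset.univ : Finset (Fin m × Fin 3)).filter
        (fun jk => φ jk.1 jk.2 = ⟨i, false⟩)).image
      (fun jk => (MceNode.ak jk.1 jk.2, MceNode.bk jk.1 jk.2))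

/-- The set `Ê` of all candidate edges. -/
def Ehat {n m : ℕ} (φ : CnfFormula n m) : Finset (MceNode n m × MceNode n m) :=
  (Finset.univ : Finset (Fin n)).biUnion (fun i => Pclass φ i ∪ Nclass φ i)

/-- The weight of a candidate edge: `1` for the variable-gadget edges
`(u_i^t, v_i^t)` and `(u_i^f, v_i^f)`, `0` for the clause-gadget edges. -/
def edgeWeight {n m : ℕ} : MceNode n m × MceNode n m → ℕ
  | (MceNode.ut _, MceNode.vt _) => 1
  | (MceNode.uf _, MceNode.vf _) => 1
  | _ => 0

/-- The total weight of a selection of candidate edges. -/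
def selWeight {n m : ℕ} (R : Finset (MceNode n m × MceNode n m)) : ℕ :=
  ∑ e ∈ R, edgeWeight e

/-- `R` is a union of classes: whenever it meets a class `P_i` or `N_i`, it
contains the whole class. -/
def IsUnionOfClasses {n m : ℕ} (φ : CnfFormula n m)
    (R : Finset (MceNode n m × MceNode n m)) : Prop :=
  ∀ i : Fin n,
    ((Pclass φ i ∩ R).Nonempty → Pclass φ i ⊆ R) ∧
    ((Nclass φ i ∩ R).Nonempty → Nclass φ i ⊆ R)

/-- `R` connects the source `u_1` to the sink `b_m`: there is a directed path
from `u_1` to `b_m` using solid edges together with the edges of `R`. -/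
def Connects {n m : ℕ} (hn : 0 < n) (hm : 0 < m)
    (R : Finset (MceNode n m × MceNode n m)) : Prop :=
  Relation.ReflTransGen (fun x y => SolidEdge n m x y ∨ (x, y) ∈ R)
    (MceNode.u ⟨0, hn⟩) (MceNode.b ⟨m - 1, Nat.sub_lt hm Nat.one_pos⟩)

/-! The classes `P_i` and `N_i` are the fibres of one map: every candidate edge carries a literal,
and the class of a literal consists of the edges carrying it. So the classes are pairwise disjoint,
and each contains exactly one edge of weight `1`, its variable edge; hence any union of classes has
weight equal to the number of literals chosen, which is `n` for the literals true under an
assignment. The true literals open one branch of every variable gadget and, by satisfaction, some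
branch of every clause gadget, and the gadgets are strung together by solid edges. -/

open Relation (ReflTransGen)

section Chain

variable {α : Type*} {r : α → α → Prop} {k : ℕ} {x y : Fin k → α}

theorem reflTransGen_of_links (hxy : ∀ i, ReflTransGen r (x i) (y i))
    (hyx : ∀ i i' : Fin k, (i : ℕ) + 1 = i' → r (y i) (x i')) {i j : Fin k} (hij : i ≤ j) :
    ReflTransGen r (x i) (y j) := by
  obtain ⟨j, hj⟩ := j
  replace hij : (i : ℕ) ≤ j := hij
  induction j, hij using Nat.le_induction with
  | base => exact hxy i
  | succ j _ ih =>
    have hj' : j < k := Nat.lt_of_succ_lt hj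
    exact ((ih hj').tail (hyx ⟨j, hj'⟩ ⟨j + 1, hj⟩ rfl)).trans (hxy _)

end Chain

section Classes

variable {n m : ℕ}

/-- The candidate edge of weight `1` carrying the literal `ℓ`: `(u_i^t, v_i^t)` for `x_i` and
`(u_i^f, v_i^f)` for `¬x_i`. -/
def litEdge (ℓ : Lit n) : MceNode n m × MceNode n m :=
  if ℓ.pos then (.ut ℓ.var, .vt ℓ.var) else (.uf ℓ.var, .vf ℓ.var)

/-- The candidate edge `(a_j^k, b_j^k)` of weight `0`, at position `k` of clause `j`. -/
def clauseEdge (j : Fin m) (k : Fin 3) : MceNode n m × MceNode n m :=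
  (.ak j k, .bk j k)

/-- The class of a literal, treating both polarities uniformly: `P_i` for `x_i` and `N_i` for
`¬x_i`. -/
def litClass (φ : CnfFormula n m) (ℓ : Lit n) : Finset (MceNode n m × MceNode n m) :=
  if ℓ.pos then Pclass φ ℓ.var else Nclass φ ℓ.var

/-- The selection of candidate edges given by a set of literals: the union of their classes.
The set may contain both or neither of `x_i` and `¬x_i`. -/
def selection (φ : CnfFormula n m) (T : Finset (Lit n)) : Finset (MceNode n m × MceNode n m) :=
  T.biUnion (litClass φ)

variable {φ : CnfFormula n m} {T : Finset (Lit n)} {ℓ ℓ' : Lit n} {e : MceNode n m × MceNode n m}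

theorem litEdge_injective : Function.Injective (litEdge : Lit n → MceNode n m × MceNode n m) := by
  rintro ⟨i, _ | _⟩ ⟨i', _ | _⟩ h <;> simp_all [litEdge]

theorem clauseEdge_inj {j j' : Fin m} {k k' : Fin 3} :
    (clauseEdge j k : MceNode n m × MceNode n m) = clauseEdge j' k' ↔ j = j' ∧ k = k' := by
  simp [clauseEdge]

theorem litEdge_ne_clauseEdge (ℓ : Lit n) (j : Fin m) (k : Fin 3) :
    litEdge ℓ ≠ clauseEdge j k := by
  obtain ⟨i, _ | _⟩ := ℓ <;> simp [litEdge, clauseEdge]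

theorem mem_litClass :
    e ∈ litClass φ ℓ ↔ e = litEdge ℓ ∨ ∃ j k, φ j k = ℓ ∧ e = clauseEdge j k := by
  obtain ⟨i, _ | _⟩ := ℓ <;> simp [litClass, Pclass, Nclass, litEdge, clauseEdge, eq_comm]

theorem eq_of_mem_litClass (h : e ∈ litClass φ ℓ) (h' : e ∈ litClass φ ℓ') : ℓ = ℓ' := by
  rw [mem_litClass] at h h'
  rcases h with rfl | ⟨j, k, rfl, rfl⟩ <;> rcases h' with h' | ⟨j', k', rfl, h'⟩
  · exact litEdge_injective h'
  · exact absurd h' (litEdge_ne_clauseEdge _ _ _)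
  · exact absurd h'.symm (litEdge_ne_clauseEdge _ _ _)
  · obtain ⟨rfl, rfl⟩ := clauseEdge_inj.1 h'
    rfl

theorem pairwiseDisjoint_litClass (φ : CnfFormula n m) (s : Set (Lit n)) :
    s.PairwiseDisjoint (litClass φ) :=
  fun _ _ _ _ hne => Finset.disjoint_left.2 fun _ h h' => hne (eq_of_mem_litClass h h')

theorem litClass_subset_Ehat (φ : CnfFormula n m) (ℓ : Lit n) : litClass φ ℓ ⊆ Ehat φ := by
  have hclass : litClass φ ℓ ⊆ Pclass φ ℓ.var ∪ Nclass φ ℓ.var := by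
    unfold litClass
    split_ifs
    exacts [Finset.subset_union_left, Finset.subset_union_right]
  exact hclass.trans (Finset.subset_biUnion_of_mem (fun i => Pclass φ i ∪ Nclass φ i)
    (Finset.mem_univ ℓ.var))

theorem litClass_subset_selection (φ : CnfFormula n m) (h : ℓ ∈ T) :
    litClass φ ℓ ⊆ selection φ T :=
  Finset.subset_biUnion_of_mem (litClass φ) h

theorem selection_subset_Ehat (φ : CnfFormula n m) (T : Finset (Lit n)) : selection φ T ⊆ Ehat φ :=
  Finset.biUnion_subset.2 fun ℓ _ => litClass_subset_Ehat φ ℓ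

theorem litClass_subset_selection_of_inter_nonempty (h : (litClass φ ℓ ∩ selection φ T).Nonempty) :
    litClass φ ℓ ⊆ selection φ T := by
  obtain ⟨e, he⟩ := h
  obtain ⟨heℓ, heT⟩ := Finset.mem_inter.1 he
  obtain ⟨ℓ', hℓ', heℓ'⟩ := Finset.mem_biUnion.1 heT
  obtain rfl : ℓ = ℓ' := eq_of_mem_litClass heℓ heℓ'
  exact litClass_subset_selection φ hℓ'

theorem isUnionOfClasses_selection (φ : CnfFormula n m) (T : Finset (Lit n)) :
    IsUnionOfClasses φ (selection φ T) :=
  fun i => ⟨litClass_subset_selection_of_inter_nonempty (ℓ := ⟨i, true⟩),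
    litClass_subset_selection_of_inter_nonempty (ℓ := ⟨i, false⟩)⟩

theorem edgeWeight_litEdge (ℓ : Lit n) :
    edgeWeight (litEdge ℓ : MceNode n m × MceNode n m) = 1 := by
  obtain ⟨i, _ | _⟩ := ℓ <;> rfl

theorem edgeWeight_clauseEdge (j : Fin m) (k : Fin 3) :
    edgeWeight (clauseEdge j k : MceNode n m × MceNode n m) = 0 :=
  rfl

theorem selWeight_litClass (φ : CnfFormula n m) (ℓ : Lit n) : selWeight (litClass φ ℓ) = 1 := by
  have hmem : litEdge ℓ ∈ litClass φ ℓ := mem_litClass.2 (.inl rfl)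
  refine (Finset.sum_eq_single_of_mem _ hmem fun e he hne => ?_).trans (edgeWeight_litEdge ℓ)
  obtain ⟨j, k, -, rfl⟩ := (mem_litClass.1 he).resolve_left hne
  exact edgeWeight_clauseEdge j k

theorem selWeight_selection (φ : CnfFormula n m) (T : Finset (Lit n)) :
    selWeight (selection φ T) = T.card :=
  calc selWeight (selection φ T)
      = ∑ ℓ ∈ T, selWeight (litClass φ ℓ) := Finset.sum_biUnion (pairwiseDisjoint_litClass φ T)
    _ = T.card := by simp only [selWeight_litClass, Finset.sum_const, smul_eq_mul, mul_one]

end Classes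

section Paths

variable {n m : ℕ} {R : Finset (MceNode n m × MceNode n m)}

/-- The edge relation of the gadget graph augmented by the selection `R`; `Connects` asks for a
path of such edges from source to sink. -/
def Step (R : Finset (MceNode n m × MceNode n m)) (p q : MceNode n m) : Prop :=
  SolidEdge n m p q ∨ (p, q) ∈ R

theorem reflTransGen_step_of_solid_sel_solid {p p' q' q : MceNode n m} (hp : SolidEdge n m p p')
    (hR : (p', q') ∈ R) (hq : SolidEdge n m q' q) : ReflTransGen (Step R) p q :=
  ((ReflTransGen.single (.inl hp)).tail (.inr hR)).tail (.inl hq)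

theorem reflTransGen_u_v {i : Fin n} {c : Bool} (h : litEdge ⟨i, c⟩ ∈ R) :
    ReflTransGen (Step R) (.u i) (.v i) := by
  cases c
  · exact reflTransGen_step_of_solid_sel_solid (.u_uf i) h (.vf_v i)
  · exact reflTransGen_step_of_solid_sel_solid (.u_ut i) h (.vt_v i)

theorem reflTransGen_a_b {j : Fin m} {k : Fin 3} (h : clauseEdge j k ∈ R) :
    ReflTransGen (Step R) (.a j) (.b j) :=
  reflTransGen_step_of_solid_sel_solid (.a_ak j k) h (.bk_b j k)

theorem connects_of_gadgets_open (hn : 0 < n) (hm : 0 < m)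
    (hvar : ∀ i, ∃ c, litEdge ⟨i, c⟩ ∈ R) (hclause : ∀ j, ∃ k, clauseEdge j k ∈ R) :
    Connects hn hm R := by
  have hvars : ReflTransGen (Step R) (.u ⟨0, hn⟩) (.v ⟨n - 1, Nat.sub_lt hn Nat.one_pos⟩) :=
    reflTransGen_of_links (fun i => (hvar i).elim fun _ => reflTransGen_u_v)
      (fun i i' h => .inl (.v_u i i' h)) (Nat.zero_le _)
  have hbridge : Step R (.v ⟨n - 1, Nat.sub_lt hn Nat.one_pos⟩) (.a ⟨0, hm⟩) :=
    .inl (.v_a _ _ (Nat.sub_add_cancel hn) rfl)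
  have hclauses : ReflTransGen (Step R) (.a ⟨0, hm⟩) (.b ⟨m - 1, Nat.sub_lt hm Nat.one_pos⟩) :=
    reflTransGen_of_links (fun j => (hclause j).elim fun _ => reflTransGen_a_b)
      (fun j j' h => .inl (.b_a j j' h)) (Nat.zero_le _)
  exact (hvars.tail hbridge).trans hclauses

theorem connects_selection (hn : 0 < n) (hm : 0 < m) {φ : CnfFormula n m} {T : Finset (Lit n)}
    (hvar : ∀ i, ∃ c, ⟨i, c⟩ ∈ T) (hclause : ∀ j, ∃ k, φ j k ∈ T) :
    Connects hn hm (selection φ T) :=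
  connects_of_gadgets_open hn hm
    (fun i => (hvar i).imp fun _ hc =>
      litClass_subset_selection φ hc (mem_litClass.2 (.inl rfl)))
    (fun j => (hclause j).imp fun k hk =>
      litClass_subset_selection φ hk (mem_litClass.2 (.inr ⟨j, k, rfl, rfl⟩)))

end Paths

section Assignments

variable {n : ℕ}

/-- The set of literals made true by the assignment `σ`. -/
def trueLits (σ : Fin n → Bool) : Finset (Lit n) :=
  Finset.univ.image fun i => ⟨i, σ i⟩

theorem mem_trueLits {σ : Fin n → Bool} {ℓ : Lit n} : ℓ ∈ trueLits σ ↔ σ ℓ.var = ℓ.pos := by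
  obtain ⟨i, c⟩ := ℓ
  simp [trueLits]

theorem card_trueLits (σ : Fin n → Bool) : (trueLits σ).card = n := by
  have hinj : Function.Injective fun i => (⟨i, σ i⟩ : Lit n) := fun _ _ h => congrArg Lit.var h
  rw [trueLits, Finset.card_image_of_injective _ hinj, Finset.card_fin]

theorem selection_trueLits {m : ℕ} (φ : CnfFormula n m) (σ : Fin n → Bool) :
    selection φ (trueLits σ) =
      Finset.univ.biUnion fun i => if σ i then Pclass φ i else Nclass φ i :=
  Finset.image_biUnion

end Assignments

/-- Claim 1 of the MCE NP-completeness reduction: a satisfying assignment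
`σ` of `φ` yields the selection `R = ⋃_{σ i} P_i ∪ ⋃_{¬σ i} N_i`, which is a
subset of `Ê`, a union of classes, connects the source to the sink, and has
total weight exactly `n`. -/
theorem mce_claim1 {n m : ℕ} (hn : 0 < n) (hm : 0 < m)
    (φ : CnfFormula n m) (σ : Fin n → Bool) (hσ : Satisfies φ σ) :
    let R : Finset (MceNode n m × MceNode n m) :=
      (Finset.univ : Finset (Fin n)).biUnion
        (fun i => if σ i then Pclass φ i else Nclass φ i)
    R ⊆ Ehat φ ∧ IsUnionOfClasses φ R ∧ Connects hn hm R ∧ selWeight R = n := by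
  intro R
  have hR : R = selection φ (trueLits σ) := (selection_trueLits φ σ).symm
  have hvar : ∀ i, ∃ c, ⟨i, c⟩ ∈ trueLits σ := fun i => ⟨σ i, mem_trueLits.2 rfl⟩
  have hclause : ∀ j, ∃ k, φ j k ∈ trueLits σ := fun j => (hσ j).imp fun _ => mem_trueLits.2
  rw [hR]
  exact ⟨selection_subset_Ehat φ _, isUnionOfClasses_selection φ _,
    connects_selection hn hm hvar hclause, (selWeight_selection φ _).trans (card_trueLits σ)⟩
end

section
/- (Weight lower bound in the MCE NP-completeness reduction.) Let φ be a 3-CNF formula with n ≥ 1 variables and m ≥ 1 clauses, and consider its MCE gadget graph. Every selection R ⊆ Ê that is a union of classes and connects the source u_1 to the sink b_m has total weight at least n. -/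
/-! Call the number of variable gadgets completed at a node its stage. Solid edges do not change the
stage, and a candidate edge raises it by exactly its weight. The stage thus climbs from `0` at `u_1`
to `n` at `b_m`, and each of the `n` unit intervals in between must be spanned by an edge of `R`. -/

open Relation

section Potential

variable {α : Type*} {x y : α}

theorem exists_rel_of_reflTransGen_of_not {r : α → α → Prop} {p : α → Prop}
    (h : ReflTransGen r x y) (hx : p x) (hy : ¬ p y) : ∃ a b, r a b ∧ p a ∧ ¬ p b := by
  induction h with
  | refl => exact absurd hx hy
  | @tail b c _ hbc ih =>
    by_cases hb : p b
    · exact ⟨b, c, hbc, hb, hy⟩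
    · exact ih hb

variable {s : α → α → Prop} {R : Finset (α × α)}

theorem Ico_subset_biUnion_Ico_of_reflTransGen {β : Type*} [LinearOrder β] [LocallyFiniteOrder β]
    {d : α → β} (hs : ∀ a b, s a b → d b ≤ d a)
    (h : ReflTransGen (fun a b ↦ s a b ∨ (a, b) ∈ R) x y) :
    Finset.Ico (d x) (d y) ⊆ R.biUnion fun e ↦ Finset.Ico (d e.1) (d e.2) := by
  intro k hk
  obtain ⟨hxk, hky⟩ := Finset.mem_Ico.mp hk
  obtain ⟨a, b, hab, hak, hbk⟩ :=
    exists_rel_of_reflTransGen_of_not (p := fun z ↦ d z ≤ k) h hxk hky.not_ge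
  have hkb : k < d b := not_le.mp hbk
  have hR : (a, b) ∈ R := hab.resolve_left fun hsab ↦ hbk ((hs a b hsab).trans hak)
  exact Finset.mem_biUnion.mpr ⟨(a, b), hR, Finset.mem_Ico.mpr ⟨hak, hkb⟩⟩

/- A walk may use an edge of `R` repeatedly, so adding up increments along it does not suffice;
covering the interval from `d x` to `d y` counts each edge once. -/
theorem potential_le_add_sum_of_reflTransGen {d : α → ℕ} {w : α × α → ℕ}
    (hs : ∀ a b, s a b → d b ≤ d a) (hR : ∀ e ∈ R, d e.2 ≤ d e.1 + w e)
    (h : ReflTransGen (fun a b ↦ s a b ∨ (a, b) ∈ R) x y) :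
    d y ≤ d x + ∑ e ∈ R, w e := by
  rw [← Nat.sub_le_iff_le_add']
  calc d y - d x = (Finset.Ico (d x) (d y)).card := (Nat.card_Ico _ _).symm
    _ ≤ (R.biUnion fun e ↦ Finset.Ico (d e.1) (d e.2)).card :=
      Finset.card_le_card (Ico_subset_biUnion_Ico_of_reflTransGen hs h)
    _ ≤ ∑ e ∈ R, (Finset.Ico (d e.1) (d e.2)).card := Finset.card_biUnion_le
    _ ≤ ∑ e ∈ R, w e := Finset.sum_le_sum fun e he ↦ by
      rw [Nat.card_Ico]
      exact Nat.sub_le_iff_le_add'.mpr (hR e he)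

end Potential

section Stage

variable {n m : ℕ}

/-- The stage of a node: the number of variable gadgets completed on reaching it. It is the
potential of which the edge weights are the increments. Since `Fin n` counts from `0`, there are
`i` gadgets before `u i`. -/
def MceNode.stage : MceNode n m → ℕ
  | .u i | .ut i | .uf i => i
  | .vt i | .vf i | .v i => i + 1
  | .a _ | .ak _ _ | .bk _ _ | .b _ => n

theorem SolidEdge.stage_eq {x y : MceNode n m} (h : SolidEdge n m x y) : y.stage = x.stage := by
  cases h with
  | v_u _ _ h => exact h.symm
  | v_a _ _ hi _ => exact hi.symm
  | _ => rfl

theorem stage_snd_eq_stage_fst_add_edgeWeight {φ : CnfFormula n m}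
    {e : MceNode n m × MceNode n m} (he : e ∈ Ehat φ) :
    e.2.stage = e.1.stage + edgeWeight e := by
  simp only [Ehat, Pclass, Nclass, Finset.mem_biUnion, Finset.mem_union, Finset.mem_singleton,
    Finset.mem_image] at he
  obtain ⟨i, -, (rfl | ⟨jk, -, rfl⟩) | (rfl | ⟨jk, -, rfl⟩)⟩ := he <;> rfl

theorem stage_le_stage_add_selWeight {φ : CnfFormula n m} {R : Finset (MceNode n m × MceNode n m)}
    (hsub : R ⊆ Ehat φ) {x y : MceNode n m}
    (h : ReflTransGen (fun a b ↦ SolidEdge n m a b ∨ (a, b) ∈ R) x y) :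
    y.stage ≤ x.stage + selWeight R :=
  potential_le_add_sum_of_reflTransGen (fun _ _ hab ↦ hab.stage_eq.le)
    (fun _ he ↦ (stage_snd_eq_stage_fst_add_edgeWeight (hsub he)).le) h

theorem mce_weight_lower_bound_general (hn : 0 < n) (hm : 0 < m) (φ : CnfFormula n m)
    (R : Finset (MceNode n m × MceNode n m)) (hsub : R ⊆ Ehat φ) (hconn : Connects hn hm R) :
    n ≤ selWeight R := by
  simpa only [MceNode.stage, zero_add] using stage_le_stage_add_selWeight hsub hconn

end Stage

/-- Weight lower bound in the MCE NP-completeness reduction: every selection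
`R ⊆ Ê` that is a union of classes and connects the source `u_1` to the sink
`b_m` has total weight at least `n`. -/
theorem mce_weight_lower_bound {n m : ℕ} (hn : 0 < n) (hm : 0 < m)
    (φ : CnfFormula n m) (R : Finset (MceNode n m × MceNode n m))
    (hsub : R ⊆ Ehat φ)
    (hclasses : IsUnionOfClasses φ R)
    (hconn : Connects hn hm R) :
    n ≤ selWeight R :=
  mce_weight_lower_bound_general hn hm φ R hsub hconn
end
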